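/- Let α ∈ ℝ with α > 1, and let U = {(x,y,z,p,q) ∈ ℝ⁵ : x > 0 and q > 0}. On U define ω₁ = dy − p dx, ω₂ = dp − q dx, ω₃ = dz − F dx with F = q z² + (1/(α²−1))·(q z² − z/x + 1/(4 q x²)), and ω₄ = (1/(2 q³ x² (α²−1))) dq − ((4α²q²x²z² − 4α²qxz + (3 − 2α²))/(4(α²−1)² x³ q²)) dx, ω₅ = −dx. Define K = 1/(2 q³ x² (α²−1)) (as a function on U), and θ₁ = ω₃ − ((4α²q²x²z² − 1)/(4 q² x² (α²−1)))·ω₂, θ₂ = ω₁, θ₃ = K^{1/3}·ω₂, θ₄ = K^{−1/3}·ω₄ + a₄₂·θ₂ + a₄₃·θ₃, θ₅ = K^{−1/3}·ω₅ + a₅₂·θ₂ + a₅₃·θ₃, where a₄₂ = 2^{1/3}·α²·(α²−9)·(4qxz(qxz−1)+1)/(60·x^{10/3}·(α²−1)^{8/3}·q²), a₄₃ = −2^{2/3}·(12α²q²x²z² − 8α²qxz − 2α² + 3)/(12·x^{5/3}·(α²−1)^{4/3}·q), a₅₂ = 2^{1/3}·(2α²−3)/(5·(α²−1)^{2/3}·x^{1/3}),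 a₅₃ = −2^{2/3}·q·x^{4/3}·(α²−1)^{2/3} (all real powers taken of positive reals). Then there exist smooth 1-forms Ω₁, …, Ω₇ on U such that Cartan's structure equations hold at every point of U: dθ₁ = θ₁∧(2Ω₁+Ω₄) + θ₂∧Ω₂ + θ₃∧θ₄; dθ₂ = θ₁∧Ω₃ + θ₂∧(Ω₁+2Ω₄) + θ₃∧θ₅; dθ₃ = θ₁∧Ω₅ + θ₂∧Ω₆ + θ₃∧(Ω₁+Ω₄) + θ₄∧θ₅; dθ₄ = θ₁∧Ω₇ + (4/3)θ₃∧Ω₆ + θ₄∧Ω₁ + θ₅∧Ω₂; dθ₅ = θ₂∧Ω₇ − (4/3)θ₃∧Ω₅ + θ₄∧Ω₃ + θ₅∧Ω₄. -/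

import Mathlib

/-!
STATEMENT 14: existence of connection 1-forms Ω₁,…,Ω₇ on U = {x > 0, q > 0}
satisfying Cartan's structure equations for the coframing (θ₁,…,θ₅) adapted to
the Monge normal form of the rolling distribution.
-/

noncomputable section

open Real

/-- coordinate differentials dx, dy, dz, dp, dq on ℝ⁵ with coordinates (x,y,z,p,q) -/
def dc (i : Fin 5) : (Fin 5 → ℝ) →L[ℝ] ℝ := ContinuousLinearMap.proj i

/-- exterior derivative of a 1-form -/
def extd (ω : (Fin 5 → ℝ) → ((Fin 5 → ℝ) →L[ℝ] ℝ)) :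
    (Fin 5 → ℝ) → (Fin 5 → ℝ) → (Fin 5 → ℝ) → ℝ :=
  fun a u v => fderiv ℝ (fun x => ω x v) a u - fderiv ℝ (fun x => ω x u) a v

/-- wedge product of two 1-forms -/
def wedge (ω η : (Fin 5 → ℝ) → ((Fin 5 → ℝ) →L[ℝ] ℝ)) :
    (Fin 5 → ℝ) → (Fin 5 → ℝ) → (Fin 5 → ℝ) → ℝ :=
  fun a u v => ω a u * η a v - ω a v * η a u

/-- the open set U = {x > 0 and q > 0} -/
def U : Set (Fin 5 → ℝ) := {a | 0 < a 0 ∧ 0 < a 4}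

/-- F = qz² + (1/(α²−1))(qz² − z/x + 1/(4qx²)) -/
def F (α : ℝ) (a : Fin 5 → ℝ) : ℝ :=
  a 4 * (a 2)^2 + (1/(α^2 - 1)) * (a 4 * (a 2)^2 - a 2 / a 0 + 1/(4 * a 4 * (a 0)^2))

/-- ω₁ = dy − p dx -/
def ω₁ : (Fin 5 → ℝ) → ((Fin 5 → ℝ) →L[ℝ] ℝ) := fun a => dc 1 - a 3 • dc 0

/-- ω₂ = dp − q dx -/
def ω₂ : (Fin 5 → ℝ) → ((Fin 5 → ℝ) →L[ℝ] ℝ) := fun a => dc 3 - a 4 • dc 0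

/-- ω₃ = dz − F dx -/
def ω₃ (α : ℝ) : (Fin 5 → ℝ) → ((Fin 5 → ℝ) →L[ℝ] ℝ) := fun a => dc 2 - F α a • dc 0

/-- ω₄ = (1/(2q³x²(α²−1))) dq − ((4α²q²x²z² − 4α²qxz + (3 − 2α²))/(4(α²−1)²x³q²)) dx -/
def ω₄ (α : ℝ) : (Fin 5 → ℝ) → ((Fin 5 → ℝ) →L[ℝ] ℝ) :=
  fun a => (1/(2 * (a 4)^3 * (a 0)^2 * (α^2 - 1))) • dc 4
    - ((4*α^2*(a 4)^2*(a 0)^2*(a 2)^2 - 4*α^2*(a 4)*(a 0)*(a 2) + (3 - 2*α^2)) /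
       (4*(α^2 - 1)^2*(a 0)^3*(a 4)^2)) • dc 0

/-- ω₅ = −dx -/
def ω₅ : (Fin 5 → ℝ) → ((Fin 5 → ℝ) →L[ℝ] ℝ) := fun _ => -dc 0

/-- K = 1/(2q³x²(α²−1)) -/
def K (α : ℝ) (a : Fin 5 → ℝ) : ℝ := 1/(2 * (a 4)^3 * (a 0)^2 * (α^2 - 1))

/-- a₄₂ = 2^{1/3}·α²·(α²−9)·(4qxz(qxz−1)+1)/(60·x^{10/3}·(α²−1)^{8/3}·q²) -/
def a₄₂ (α : ℝ) (a : Fin 5 → ℝ) : ℝ :=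
  (2:ℝ)^((1:ℝ)/3) * α^2 * (α^2 - 9) * (4 * a 4 * a 0 * a 2 * (a 4 * a 0 * a 2 - 1) + 1) /
    (60 * (a 0)^((10:ℝ)/3) * (α^2 - 1)^((8:ℝ)/3) * (a 4)^2)

/-- a₄₃ = −2^{2/3}·(12α²q²x²z² − 8α²qxz − 2α² + 3)/(12·x^{5/3}·(α²−1)^{4/3}·q) -/
def a₄₃ (α : ℝ) (a : Fin 5 → ℝ) : ℝ :=
  -((2:ℝ)^((2:ℝ)/3) * (12*α^2*(a 4)^2*(a 0)^2*(a 2)^2 - 8*α^2*(a 4)*(a 0)*(a 2) - 2*α^2 + 3) /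
    (12 * (a 0)^((5:ℝ)/3) * (α^2 - 1)^((4:ℝ)/3) * a 4))

/-- a₅₂ = 2^{1/3}·(2α²−3)/(5·(α²−1)^{2/3}·x^{1/3}) -/
def a₅₂ (α : ℝ) (a : Fin 5 → ℝ) : ℝ :=
  (2:ℝ)^((1:ℝ)/3) * (2*α^2 - 3) / (5 * (α^2 - 1)^((2:ℝ)/3) * (a 0)^((1:ℝ)/3))

/-- a₅₃ = −2^{2/3}·q·x^{4/3}·(α²−1)^{2/3} -/
def a₅₃ (α : ℝ) (a : Fin 5 → ℝ) : ℝ :=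
  -((2:ℝ)^((2:ℝ)/3) * a 4 * (a 0)^((4:ℝ)/3) * (α^2 - 1)^((2:ℝ)/3))

/-- θ₁ = ω₃ − ((4α²q²x²z² − 1)/(4q²x²(α²−1)))·ω₂ -/
def θ₁ (α : ℝ) : (Fin 5 → ℝ) → ((Fin 5 → ℝ) →L[ℝ] ℝ) :=
  fun a => ω₃ α a - ((4*α^2*(a 4)^2*(a 0)^2*(a 2)^2 - 1) /
    (4*(a 4)^2*(a 0)^2*(α^2 - 1))) • ω₂ a

/-- θ₂ = ω₁ -/
def θ₂ : (Fin 5 → ℝ) → ((Fin 5 → ℝ) →L[ℝ] ℝ) := ω₁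

/-- θ₃ = K^{1/3}·ω₂ -/
def θ₃ (α : ℝ) : (Fin 5 → ℝ) → ((Fin 5 → ℝ) →L[ℝ] ℝ) :=
  fun a => ((K α a)^((1:ℝ)/3)) • ω₂ a

/-- θ₄ = K^{−1/3}·ω₄ + a₄₂·θ₂ + a₄₃·θ₃ -/
def θ₄ (α : ℝ) : (Fin 5 → ℝ) → ((Fin 5 → ℝ) →L[ℝ] ℝ) :=
  fun a => ((K α a)^(-(1:ℝ)/3)) • ω₄ α a + a₄₂ α a • θ₂ a + a₄₃ α a • θ₃ α a

/-- θ₅ = K^{−1/3}·ω₅ + a₅₂·θ₂ + a₅₃·θ₃ -/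
def θ₅ (α : ℝ) : (Fin 5 → ℝ) → ((Fin 5 → ℝ) →L[ℝ] ℝ) :=
  fun a => ((K α a)^(-(1:ℝ)/3)) • ω₅ a + a₅₂ α a • θ₂ a + a₅₃ α a • θ₃ α a


/-- The cube root of the coordinate `x`. -/
def cbrtX (b : Fin 5 → ℝ) : ℝ := (b 0) ^ ((1:ℝ)/3)

/-- The constant `(2(α² - 1))^{1/3}`, so that `K^{1/3} = 1/(s q x^{2/3})`. -/
def cbrtScale (α : ℝ) : ℝ := (2 * (α^2 - 1)) ^ ((1:ℝ)/3)

/-- The Laurent monomial `x^{i/3} z^j q^n`. -/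
def laurent (i : ℤ) (j : ℕ) (n : ℤ) (b : Fin 5 → ℝ) : ℝ := cbrtX b ^ i * b 2 ^ j * b 4 ^ n

lemma rpow_nat_div_three {x : ℝ} (hx : 0 ≤ x) (n : ℕ) :
    x ^ ((n:ℝ)/3) = (x ^ ((1:ℝ)/3)) ^ n := by
  rw [← Real.rpow_natCast, ← Real.rpow_mul hx]; ring_nf

lemma cbrtX_pos {b : Fin 5 → ℝ} (hb : b ∈ U) : 0 < cbrtX b := Real.rpow_pos_of_pos hb.1 _

lemma cbrtX_pow_three {b : Fin 5 → ℝ} (hb : b ∈ U) : cbrtX b ^ 3 = b 0 := by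
  have := rpow_nat_div_three hb.1.le 3
  norm_num at this
  exact this.symm

lemma cbrtScale_pos {α : ℝ} (hα : 1 < α) : 0 < cbrtScale α :=
  Real.rpow_pos_of_pos (by nlinarith) _

lemma sq_eq_cbrtScale {α : ℝ} (hα : 1 < α) : α^2 = cbrtScale α ^ 3 / 2 + 1 := by
  have := rpow_nat_div_three (x := 2 * (α^2 - 1)) (by nlinarith) 3
  norm_num at this
  rw [cbrtScale]; norm_num; linarith

lemma isOpen_U : IsOpen U :=
  (isOpen_lt continuous_const (continuous_apply 0)).inter
    (isOpen_lt continuous_const (continuous_apply 4))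

lemma hasFDerivAt_cbrtX {a : Fin 5 → ℝ} (ha : a ∈ U) :
    HasFDerivAt cbrtX ((1 / (3 * cbrtX a ^ 2)) • dc 0) a := by
  have h := (hasFDerivAt_apply (𝕜 := ℝ) (0 : Fin 5) a).rpow_const (p := (1:ℝ)/3)
    (Or.inl (ne_of_gt ha.1))
  refine h.congr_fderiv ?_
  have h2 : (a 0) ^ ((1:ℝ)/3 - 1) = 1 / cbrtX a ^ 2 := by
    have := cbrtX_pos ha
    rw [Real.rpow_sub ha.1, Real.rpow_one, ← cbrtX.eq_1 a, ← cbrtX_pow_three ha]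
    field_simp
  rw [h2]
  ext v
  simp [dc]
  exact Or.inl (by ring)

lemma hasFDerivAt_laurent {a : Fin 5 → ℝ} (ha : a ∈ U) (i : ℤ) (j : ℕ) (n : ℤ) :
    HasFDerivAt (laurent i j n)
      ((i * cbrtX a ^ (i - 3) / 3 * a 2 ^ j * a 4 ^ n) • dc 0
        + (cbrtX a ^ i * (j * a 2 ^ (j - 1)) * a 4 ^ n) • dc 2
        + (cbrtX a ^ i * a 2 ^ j * (n * a 4 ^ (n - 1))) • dc 4) a := by
  have ht := (cbrtX_pos ha).ne'
  have h0 := (hasDerivAt_zpow i (cbrtX a) (Or.inl ht)).comp_hasFDerivAt a (hasFDerivAt_cbrtX ha)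
  have h2 := (hasFDerivAt_apply (𝕜 := ℝ) (2 : Fin 5) a).pow j
  have h4 := (hasDerivAt_zpow n (a 4) (Or.inl ha.2.ne')).comp_hasFDerivAt a
    (hasFDerivAt_apply (𝕜 := ℝ) (4 : Fin 5) a)
  refine ((h0.mul h2).mul h4).congr_fderiv ?_
  have e : cbrtX a ^ (i - 1) = cbrtX a ^ (i - 3) * cbrtX a ^ 2 := by
    rw [← zpow_natCast, ← zpow_add₀ ht]; congr 1; push_cast; ring
  ext v
  simp [dc, e]
  field_simp
  ring

lemma extd_eq {ω : (Fin 5 → ℝ) → ((Fin 5 → ℝ) →L[ℝ] ℝ)} {a : Fin 5 → ℝ}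
    {ω' : (Fin 5 → ℝ) → ((Fin 5 → ℝ) →L[ℝ] ℝ)}
    (h : ∀ v, HasFDerivAt (fun b => ω b v) (ω' v) a) (u v : Fin 5 → ℝ) :
    extd ω a u v = ω' v u - ω' u v := by
  simp [extd, (h _).fderiv]

section Coefficients

variable {α : ℝ} {b : Fin 5 → ℝ}

lemma K_rpow_third (hα : 1 < α) (hb : b ∈ U) :
    K α b ^ ((1:ℝ)/3) = 1 / cbrtScale α * laurent (-2) 0 (-1) b := by
  have hs := cbrtScale_pos hα
  have ht := cbrtX_pos hb
  have hq := hb.2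
  have e : K α b = (1 / cbrtScale α * laurent (-2) 0 (-1) b) ^ 3 := by
    rw [K, ← cbrtX_pow_three hb, sq_eq_cbrtScale hα, laurent]
    simp only [zpow_neg, zpow_ofNat]
    field_simp
    ring
  rw [e, ← Real.rpow_natCast, ← Real.rpow_mul (by rw [laurent]; positivity)]
  norm_num

lemma K_rpow_neg_third (hα : 1 < α) (hb : b ∈ U) :
    K α b ^ (-(1:ℝ)/3) = cbrtScale α * laurent 2 0 1 b := by
  have hs := cbrtScale_pos hα
  have ht := cbrtX_pos hb
  have hq := hb.2
  have hK : 0 ≤ K α b := by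
    rw [K]
    have : 0 < α^2 - 1 := by nlinarith
    have := hb.1
    positivity
  rw [neg_div, Real.rpow_neg hK, K_rpow_third hα hb]
  simp only [laurent, zpow_neg, zpow_ofNat]
  field_simp


lemma F_eq_laurent (hα : 1 < α) (hb : b ∈ U) :
    F α b = 1 / (2 * cbrtScale α ^ 3) * laurent (-6) 0 (-1) b
      - 2 / cbrtScale α ^ 3 * laurent (-3) 1 0 b
      + (2 + cbrtScale α ^ 3) / cbrtScale α ^ 3 * laurent 0 2 1 b := by
  have hs := cbrtScale_pos hα
  have ht := cbrtX_pos hb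
  have hq := hb.2
  rw [F, ← cbrtX_pow_three hb, sq_eq_cbrtScale hα]
  simp only [laurent, zpow_neg, zpow_ofNat, add_sub_cancel_right]
  field_simp
  ring

lemma two_rpow_two_thirds (hα : 1 < α) :
    (2:ℝ)^((2:ℝ)/3) * (α^2 - 1)^((2:ℝ)/3) = cbrtScale α ^ 2 := by
  have := rpow_nat_div_three (x := 2 * (α^2 - 1)) (by nlinarith) 2
  rw [← Real.mul_rpow (by norm_num) (by nlinarith)]
  exact_mod_cast this

lemma a₄₂_eq_laurent (hα : 1 < α) (hb : b ∈ U) :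
    a₄₂ α b = (cbrtScale α ^ 6 - 14 * cbrtScale α ^ 3 - 32) / (30 * cbrtScale α ^ 8) *
      (laurent (-10) 0 (-2) b - 4 * laurent (-7) 1 (-1) b + 4 * laurent (-4) 2 0 b) := by
  have hs := cbrtScale_pos hα
  have ht := cbrtX_pos hb
  have hq := hb.2
  have hx : (b 0)^((10:ℝ)/3) = cbrtX b ^ 10 := by exact_mod_cast rpow_nat_div_three hb.1.le 10
  have hβ : (α^2 - 1)^((8:ℝ)/3) = (2:ℝ)^((1:ℝ)/3) * cbrtScale α ^ 8 / 8 := by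
    have hpos : 0 < α^2 - 1 := by nlinarith
    have h8 : (α^2 - 1)^((8:ℝ)/3) = ((α^2 - 1)^((1:ℝ)/3)) ^ 8 := by
      exact_mod_cast rpow_nat_div_three hpos.le 8
    have h2 : ((2:ℝ)^((1:ℝ)/3)) ^ 3 = 2 := by
      have := rpow_nat_div_three (x := 2) (by norm_num) 3
      norm_num at this ⊢
      linarith
    rw [h8, cbrtScale, Real.mul_rpow (by norm_num) hpos.le]
    generalize (2:ℝ)^((1:ℝ)/3) = c at h2
    linear_combination -(((α^2 - 1)^((1:ℝ)/3)) ^ 8 / 8) * (c^6 + 2 * c^3 + 4) * h2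
  have h2 : 0 < (2:ℝ)^((1:ℝ)/3) := by positivity
  rw [a₄₂, hx, hβ, ← cbrtX_pow_three hb, sq_eq_cbrtScale hα]
  simp only [laurent, zpow_neg, zpow_ofNat]
  field_simp
  ring

lemma a₅₂_eq_laurent (hα : 1 < α) (hb : b ∈ U) :
    a₅₂ α b = (2 * cbrtScale α ^ 3 - 2) / (5 * cbrtScale α ^ 2) * laurent (-1) 0 0 b := by
  have hs := cbrtScale_pos hα
  have ht := cbrtX_pos hb
  have hpos : 0 < α^2 - 1 := by nlinarith
  have h2 : (2:ℝ)^((1:ℝ)/3) * (2:ℝ)^((2:ℝ)/3) = 2 := by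
    rw [← Real.rpow_add (by norm_num)]; norm_num
  have hc : 0 < (2:ℝ)^((2:ℝ)/3) := by positivity
  have hβ : 0 < (α^2 - 1)^((2:ℝ)/3) := by positivity
  rw [a₅₂, ← cbrtX.eq_1 b, ← two_rpow_two_thirds hα, sq_eq_cbrtScale hα]
  rw [sq_eq_cbrtScale hα] at hβ
  simp only [laurent, zpow_neg, zpow_ofNat]
  field_simp
  linear_combination (cbrtScale α ^ 3 - 1) * h2

lemma a₄₃_mul_K_rpow (hα : 1 < α) (hb : b ∈ U) :
    a₄₃ α b * K α b ^ ((1:ℝ)/3) = 1 / (3 * cbrtScale α ^ 5) *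
      ((cbrtScale α ^ 3 - 1) * laurent (-7) 0 (-2) b
        + (8 + 4 * cbrtScale α ^ 3) * laurent (-4) 1 (-1) b
        - (12 + 6 * cbrtScale α ^ 3) * laurent (-1) 2 0 b) := by
  have hs := cbrtScale_pos hα
  have ht := cbrtX_pos hb
  have hq := hb.2
  have hpos : 0 < α^2 - 1 := by nlinarith
  have hx : (b 0)^((5:ℝ)/3) = cbrtX b ^ 5 := by exact_mod_cast rpow_nat_div_three hb.1.le 5
  have hc : 0 < (2:ℝ)^((2:ℝ)/3) := by positivity
  have hβ : (α^2 - 1)^((4:ℝ)/3) = (2:ℝ)^((2:ℝ)/3) * cbrtScale α ^ 4 / 4 := by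
    have h2 : (2:ℝ)^((2:ℝ)/3) * (2:ℝ)^((2:ℝ)/3) * (2:ℝ)^((2:ℝ)/3) = 4 := by
      rw [← Real.rpow_add (by norm_num), ← Real.rpow_add (by norm_num)]; norm_num
    have h4 : (α^2 - 1)^((4:ℝ)/3) = ((α^2 - 1)^((2:ℝ)/3))^2 := by
      rw [sq ((α^2 - 1)^((2:ℝ)/3)), ← Real.rpow_add hpos]; norm_num
    rw [h4, show cbrtScale α ^ 4 = (cbrtScale α ^ 2)^2 by ring, ← two_rpow_two_thirds hα]
    linear_combination -(((α^2 - 1)^((2:ℝ)/3))^2 / 4) * h2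
  rw [K_rpow_third hα hb, a₄₃, hx, hβ, ← cbrtX_pow_three hb, sq_eq_cbrtScale hα]
  simp only [laurent, zpow_neg, zpow_ofNat]
  field_simp
  ring

lemma a₅₃_mul_K_rpow (hα : 1 < α) (hb : b ∈ U) :
    a₅₃ α b * K α b ^ ((1:ℝ)/3) = -(cbrtScale α * laurent 2 0 0 b) := by
  have hs := cbrtScale_pos hα
  have ht := cbrtX_pos hb
  have hq := hb.2
  have hx : (b 0)^((4:ℝ)/3) = cbrtX b ^ 4 := by exact_mod_cast rpow_nat_div_three hb.1.le 4
  have e : a₅₃ α b = -(cbrtScale α ^ 2 * b 4 * cbrtX b ^ 4) := by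
    rw [a₅₃, hx, ← two_rpow_two_thirds hα]; ring
  rw [K_rpow_third hα hb, e]
  simp only [laurent, zpow_neg, zpow_ofNat]
  field_simp

lemma θ₁_apply (hα : 1 < α) (hb : b ∈ U) (v : Fin 5 → ℝ) :
    θ₁ α b v = v 2
      - (1 / (2 * cbrtScale α ^ 3) * laurent (-6) 0 (-1) b
        - 2 / cbrtScale α ^ 3 * laurent (-3) 1 0 b
        + (2 + cbrtScale α ^ 3) / cbrtScale α ^ 3 * laurent 0 2 1 b) * v 0
      - ((2 + cbrtScale α ^ 3) / cbrtScale α ^ 3 * laurent 0 2 0 b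
        - 1 / (2 * cbrtScale α ^ 3) * laurent (-6) 0 (-2) b) * (v 3 - b 4 * v 0) := by
  have hs := cbrtScale_pos hα
  have ht := cbrtX_pos hb
  have hq := hb.2
  have e : (4*α^2*(b 4)^2*(b 0)^2*(b 2)^2 - 1) / (4*(b 4)^2*(b 0)^2*(α^2 - 1))
      = (2 + cbrtScale α ^ 3) / cbrtScale α ^ 3 * laurent 0 2 0 b
        - 1 / (2 * cbrtScale α ^ 3) * laurent (-6) 0 (-2) b := by
    rw [← cbrtX_pow_three hb, sq_eq_cbrtScale hα]
    simp only [laurent, zpow_neg, zpow_ofNat, add_sub_cancel_right]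
    field_simp
    ring
  simp [θ₁, ω₃, ω₂, dc, F_eq_laurent hα hb, e]

lemma θ₂_apply (v : Fin 5 → ℝ) : θ₂ b v = v 1 - b 3 * v 0 := by simp [θ₂, ω₁, dc]

lemma θ₃_apply (hα : 1 < α) (hb : b ∈ U) (v : Fin 5 → ℝ) :
    θ₃ α b v = 1 / cbrtScale α * laurent (-2) 0 (-1) b * (v 3 - b 4 * v 0) := by
  rw [θ₃, K_rpow_third hα hb]
  simp [ω₂, dc]

lemma θ₄_apply (hα : 1 < α) (hb : b ∈ U) (v : Fin 5 → ℝ) :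
    θ₄ α b v = 1 / cbrtScale α ^ 2 * laurent (-4) 0 (-2) b * v 4
      + 1 / cbrtScale α ^ 5 * ((cbrtScale α ^ 3 - 1) * laurent (-7) 0 (-1) b
        + (4 + 2 * cbrtScale α ^ 3) * laurent (-4) 1 0 b
        - (4 + 2 * cbrtScale α ^ 3) * laurent (-1) 2 1 b) * v 0
      + (cbrtScale α ^ 6 - 14 * cbrtScale α ^ 3 - 32) / (30 * cbrtScale α ^ 8) *
        (laurent (-10) 0 (-2) b - 4 * laurent (-7) 1 (-1) b + 4 * laurent (-4) 2 0 b)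
        * (v 1 - b 3 * v 0)
      + 1 / (3 * cbrtScale α ^ 5) * ((cbrtScale α ^ 3 - 1) * laurent (-7) 0 (-2) b
        + (8 + 4 * cbrtScale α ^ 3) * laurent (-4) 1 (-1) b
        - (12 + 6 * cbrtScale α ^ 3) * laurent (-1) 2 0 b) * (v 3 - b 4 * v 0) := by
  have hs := cbrtScale_pos hα
  have ht := cbrtX_pos hb
  have hq := hb.2
  have e : K α b ^ (-(1:ℝ)/3) * ω₄ α b v = 1 / cbrtScale α ^ 2 * laurent (-4) 0 (-2) b * v 4
      + 1 / cbrtScale α ^ 5 * ((cbrtScale α ^ 3 - 1) * laurent (-7) 0 (-1) b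
        + (4 + 2 * cbrtScale α ^ 3) * laurent (-4) 1 0 b
        - (4 + 2 * cbrtScale α ^ 3) * laurent (-1) 2 1 b) * v 0 := by
    rw [K_rpow_neg_third hα hb, ω₄, ← cbrtX_pow_three hb, sq_eq_cbrtScale hα]
    simp [dc, laurent, zpow_neg, zpow_ofNat, -mul_eq_mul_left_iff]
    field_simp
    ring
  have e' : θ₄ α b v = K α b ^ (-(1:ℝ)/3) * ω₄ α b v + a₄₂ α b * θ₂ b v
      + a₄₃ α b * K α b ^ ((1:ℝ)/3) * ω₂ b v := by
    simp [θ₄, θ₃, mul_assoc]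
  rw [e', e, a₄₂_eq_laurent hα hb, a₄₃_mul_K_rpow hα hb, θ₂_apply]
  simp [ω₂, dc]

lemma θ₅_apply (hα : 1 < α) (hb : b ∈ U) (v : Fin 5 → ℝ) :
    θ₅ α b v = -(cbrtScale α * laurent 2 0 1 b) * v 0
      + (2 * cbrtScale α ^ 3 - 2) / (5 * cbrtScale α ^ 2) * laurent (-1) 0 0 b * (v 1 - b 3 * v 0)
      + -(cbrtScale α * laurent 2 0 0 b) * (v 3 - b 4 * v 0) := by
  have e : θ₅ α b v = K α b ^ (-(1:ℝ)/3) * ω₅ b v + a₅₂ α b * θ₂ b v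
      + a₅₃ α b * K α b ^ ((1:ℝ)/3) * ω₂ b v := by
    simp [θ₅, θ₃, mul_assoc]
  rw [e, K_rpow_neg_third hα hb, a₅₂_eq_laurent hα hb, a₅₃_mul_K_rpow hα hb, θ₂_apply]
  simp [ω₂, ω₅, dc]

end Coefficients
/-! The connection forms. -/

def conn₁ (α : ℝ) (b : Fin 5 → ℝ) : (Fin 5 → ℝ) →L[ℝ] ℝ :=
  let s := cbrtScale α
  let t := cbrtX b
  let z := b 2
  let q := b 4
  ((24 + 22 * s^3 - s^6 - (48 + 36 * s^3 + 6 * s^6) * (q * t^3 * z)) / (15 * s^6 * t^6 * q)) • θ₂ b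
    - ((18 + 2 * s^3) / (15 * s^2 * t)) • θ₃ α b
    + ((4 * (2 + s^3) * (q * t^3 * z) - 4) / (3 * s^4 * t^5 * q)) • θ₅ α b

def conn₂ (α : ℝ) (b : Fin 5 → ℝ) : (Fin 5 → ℝ) →L[ℝ] ℝ :=
  let s := cbrtScale α
  let t := cbrtX b
  let w := 1 - 2 * (b 4 * t^3 * b 2)
  let q := b 4
  ((2 * (2 + s^3) * w) / (s^6 * t^6 * q)) • θ₁ α b
    - (((128 + 120 * s^3 + 24 * s^6 - 2 * s^9) * w^3) / (45 * s^12 * t^15 * q^3)) • θ₂ b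
    - (((32 + 14 * s^3 - s^6) * w^2) / (30 * s^8 * t^10 * q^2)) • θ₃ α b

def conn₃ (_ : Fin 5 → ℝ) : (Fin 5 → ℝ) →L[ℝ] ℝ := 0

def conn₄ (α : ℝ) (b : Fin 5 → ℝ) : (Fin 5 → ℝ) →L[ℝ] ℝ :=
  let s := cbrtScale α
  let t := cbrtX b
  let z := b 2
  let q := b 4
  ((2 * s^3 - 2) / (15 * s^3 * t^6 * q)) • θ₂ b
    + ((6 + 4 * s^3) / (15 * s^2 * t)) • θ₃ α b
    + ((2 - 2 * (2 + s^3) * (q * t^3 * z)) / (3 * s^4 * t^5 * q)) • θ₅ α b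

def conn₅ (α : ℝ) (b : Fin 5 → ℝ) : (Fin 5 → ℝ) →L[ℝ] ℝ :=
  let s := cbrtScale α
  ((56 + 28 * s^3 - 9 * s^6) / (100 * s^4 * cbrtX b ^ 2)) • θ₂ b

def conn₆ (α : ℝ) (b : Fin 5 → ℝ) : (Fin 5 → ℝ) →L[ℝ] ℝ :=
  let s := cbrtScale α
  let t := cbrtX b
  let w := 1 - 2 * (b 4 * t^3 * b 2)
  let q := b 4
  ((56 + 28 * s^3 - 9 * s^6) / (100 * s^4 * t^2)) • θ₁ α b
    - (((896 + 936 * s^3 + 210 * s^6 - 17 * s^9) * w^2) / (300 * s^10 * t^11 * q^2)) • θ₂ b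
    + (((28 + 16 * s^3 + s^6) * w) / (15 * s^6 * t^6 * q)) • θ₃ α b
    + ((2 * s^3 - 2) / (5 * s^2 * t)) • θ₄ α b
    + (((32 + 14 * s^3 - s^6) * w^2) / (30 * s^8 * t^10 * q^2)) • θ₅ α b

def conn₇ (α : ℝ) (b : Fin 5 → ℝ) : (Fin 5 → ℝ) →L[ℝ] ℝ :=
  let s := cbrtScale α
  let t := cbrtX b
  let w := 1 - 2 * (b 4 * t^3 * b 2)
  let q := b 4
  ((2 * (2 + s^3)^2 * w) / (3 * s^8 * t^7 * q)) • θ₂ b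
    - ((44 + 22 * s^3 + 9 * s^6) / (75 * s^4 * t^2)) • θ₃ α b

section Smoothness

variable {α : ℝ}

lemma contDiffOn_cbrtX : ContDiffOn ℝ (⊤ : ℕ∞) cbrtX U := by
  unfold cbrtX
  exact (contDiff_apply ℝ ℝ (0 : Fin 5)).contDiffOn.rpow_const_of_ne fun b hb => hb.1.ne'

lemma contDiffOn_laurent (i : ℤ) (j : ℕ) (n : ℤ) :
    ContDiffOn ℝ (⊤ : ℕ∞) (laurent i j n) U := by
  have e : ∀ b, laurent i j n b = cbrtX b ^ (i:ℝ) * b 2 ^ j * b 4 ^ (n:ℝ) := fun b => by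
    rw [laurent, Real.rpow_intCast, Real.rpow_intCast]
  refine ContDiffOn.congr ?_ fun b _ => e b
  exact ((contDiffOn_cbrtX.rpow_const_of_ne fun b hb => (cbrtX_pos hb).ne').mul
    ((contDiff_apply ℝ ℝ (2 : Fin 5)).contDiffOn.pow j)).mul
    ((contDiff_apply ℝ ℝ (4 : Fin 5)).contDiffOn.rpow_const_of_ne fun b hb => hb.2.ne')

lemma contDiffOn_θ₁ (hα : 1 < α) : ContDiffOn ℝ (⊤ : ℕ∞) (θ₁ α) U := by
  have h := contDiffOn_laurent
  refine contDiffOn_clm_apply.2 fun v => ContDiffOn.congr ?_ fun b hb => θ₁_apply hα hb v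
  fun_prop

lemma contDiffOn_θ₂ : ContDiffOn ℝ (⊤ : ℕ∞) θ₂ U := by
  unfold θ₂ ω₁
  fun_prop

lemma contDiffOn_θ₃ (hα : 1 < α) : ContDiffOn ℝ (⊤ : ℕ∞) (θ₃ α) U := by
  have h := contDiffOn_laurent
  refine contDiffOn_clm_apply.2 fun v => ContDiffOn.congr ?_ fun b hb => θ₃_apply hα hb v
  fun_prop

lemma contDiffOn_θ₄ (hα : 1 < α) : ContDiffOn ℝ (⊤ : ℕ∞) (θ₄ α) U := by
  have h := contDiffOn_laurent
  refine contDiffOn_clm_apply.2 fun v => ContDiffOn.congr ?_ fun b hb => θ₄_apply hα hb v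
  fun_prop

lemma contDiffOn_θ₅ (hα : 1 < α) : ContDiffOn ℝ (⊤ : ℕ∞) (θ₅ α) U := by
  have h := contDiffOn_laurent
  refine contDiffOn_clm_apply.2 fun v => ContDiffOn.congr ?_ fun b hb => θ₅_apply hα hb v
  fun_prop

lemma contDiffOn_conn₁ (hα : 1 < α) : ContDiffOn ℝ (⊤ : ℕ∞) (conn₁ α) U := by
  have ht := contDiffOn_cbrtX
  have h₂ := contDiffOn_θ₂
  have h₃ := contDiffOn_θ₃ hα
  have h₅ := contDiffOn_θ₅ hα
  have hs := cbrtScale_pos hα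
  unfold conn₁
  dsimp only
  fun_prop (disch := intro b hb; have := cbrtX_pos hb; have := hb.2; positivity)

lemma contDiffOn_conn₂ (hα : 1 < α) : ContDiffOn ℝ (⊤ : ℕ∞) (conn₂ α) U := by
  have ht := contDiffOn_cbrtX
  have h₁ := contDiffOn_θ₁ hα
  have h₂ := contDiffOn_θ₂
  have h₃ := contDiffOn_θ₃ hα
  have hs := cbrtScale_pos hα
  unfold conn₂
  dsimp only
  fun_prop (disch := intro b hb; have := cbrtX_pos hb; have := hb.2; positivity)

lemma contDiffOn_conn₄ (hα : 1 < α) : ContDiffOn ℝ (⊤ : ℕ∞) (conn₄ α) U := by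
  have ht := contDiffOn_cbrtX
  have h₂ := contDiffOn_θ₂
  have h₃ := contDiffOn_θ₃ hα
  have h₅ := contDiffOn_θ₅ hα
  have hs := cbrtScale_pos hα
  unfold conn₄
  dsimp only
  fun_prop (disch := intro b hb; have := cbrtX_pos hb; have := hb.2; positivity)

lemma contDiffOn_conn₅ (hα : 1 < α) : ContDiffOn ℝ (⊤ : ℕ∞) (conn₅ α) U := by
  have ht := contDiffOn_cbrtX
  have h₂ := contDiffOn_θ₂
  have hs := cbrtScale_pos hα
  unfold conn₅
  dsimp only
  fun_prop (disch := intro b hb; have := cbrtX_pos hb; have := hb.2; positivity)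

lemma contDiffOn_conn₆ (hα : 1 < α) : ContDiffOn ℝ (⊤ : ℕ∞) (conn₆ α) U := by
  have ht := contDiffOn_cbrtX
  have h₁ := contDiffOn_θ₁ hα
  have h₂ := contDiffOn_θ₂
  have h₃ := contDiffOn_θ₃ hα
  have h₄ := contDiffOn_θ₄ hα
  have h₅ := contDiffOn_θ₅ hα
  have hs := cbrtScale_pos hα
  unfold conn₆
  dsimp only
  fun_prop (disch := intro b hb; have := cbrtX_pos hb; have := hb.2; positivity)

lemma contDiffOn_conn₇ (hα : 1 < α) : ContDiffOn ℝ (⊤ : ℕ∞) (conn₇ α) U := by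
  have ht := contDiffOn_cbrtX
  have h₂ := contDiffOn_θ₂
  have h₃ := contDiffOn_θ₃ hα
  have hs := cbrtScale_pos hα
  unfold conn₇
  dsimp only
  fun_prop (disch := intro b hb; have := cbrtX_pos hb; have := hb.2; positivity)

end Smoothness

section StructureEquations

variable {α : ℝ} {a : Fin 5 → ℝ}

lemma structure_equation₁ (hα : 1 < α) (ha : a ∈ U) (u v : Fin 5 → ℝ) :
    extd (θ₁ α) a u v =
      wedge (θ₁ α) (fun b => (2:ℝ) • conn₁ α b + conn₄ α b) a u v + wedge θ₂ (conn₂ α) a u v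
      + wedge (θ₃ α) (θ₄ α) a u v := by
  have m := hasFDerivAt_laurent ha
  have hq := hasFDerivAt_apply (𝕜 := ℝ) (4 : Fin 5) a
  have hd := fun w : Fin 5 → ℝ =>
    (((((((m (-6) 0 (-1)).const_mul (1 / (2 * cbrtScale α ^ 3))).sub
      ((m (-3) 1 0).const_mul (2 / cbrtScale α ^ 3))).add
      ((m 0 2 1).const_mul ((2 + cbrtScale α ^ 3) / cbrtScale α ^ 3))).mul_const (w 0)).const_sub
        (w 2)).sub
      ((((m 0 2 0).const_mul ((2 + cbrtScale α ^ 3) / cbrtScale α ^ 3)).sub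
      ((m (-6) 0 (-2)).const_mul (1 / (2 * cbrtScale α ^ 3)))).mul
        ((hq.mul_const (w 0)).const_sub (w 3)))).congr_of_eventuallyEq
      (f₁ := fun b => θ₁ α b w)
      (by filter_upwards [isOpen_U.mem_nhds ha] with b hb using θ₁_apply hα hb w)
  rw [extd_eq hd]
  simp only [wedge, conn₁, conn₂, conn₄, add_apply, sub_apply, smul_apply,
    smul_eq_mul, θ₁_apply hα ha, θ₂_apply, θ₃_apply hα ha, θ₄_apply hα ha, θ₅_apply hα ha]
  have hs := cbrtScale_pos hα
  have ht := cbrtX_pos ha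
  have hq := ha.2
  obtain ⟨y, hy⟩ : ∃ y, u 1 = y + a 3 * u 0 := ⟨u 1 - a 3 * u 0, by ring⟩
  obtain ⟨y', hy'⟩ : ∃ y, v 1 = y + a 3 * v 0 := ⟨v 1 - a 3 * v 0, by ring⟩
  obtain ⟨p, hp⟩ : ∃ p, u 3 = p + a 4 * u 0 := ⟨u 3 - a 4 * u 0, by ring⟩
  obtain ⟨p', hp'⟩ : ∃ p, v 3 = p + a 4 * v 0 := ⟨v 3 - a 4 * v 0, by ring⟩
  simp only [hy, hy', hp, hp', add_sub_cancel_right]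
  simp [laurent, dc, zpow_neg]
  generalize cbrtScale α = s at *
  generalize cbrtX a = t at *
  field_simp
  ring

lemma structure_equation₂ (hα : 1 < α) (ha : a ∈ U) (u v : Fin 5 → ℝ) :
    extd θ₂ a u v =
      wedge (θ₁ α) conn₃ a u v + wedge θ₂ (fun b => conn₁ α b + (2:ℝ) • conn₄ α b) a u v
      + wedge (θ₃ α) (θ₅ α) a u v := by
  have hp := hasFDerivAt_apply (𝕜 := ℝ) (3 : Fin 5) a
  have hd : ∀ w : Fin 5 → ℝ, HasFDerivAt (fun b => θ₂ b w) (-(w 0 • dc 3)) a := fun w => by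
    simp only [θ₂_apply]
    exact (hp.mul_const (w 0)).const_sub (w 1)
  rw [extd_eq hd]
  simp only [wedge, conn₁, conn₃, conn₄, add_apply, sub_apply, smul_apply,
    zero_apply, smul_eq_mul, θ₁_apply hα ha, θ₂_apply, θ₃_apply hα ha, θ₅_apply hα ha]
  have hs := cbrtScale_pos hα
  have ht := cbrtX_pos ha
  have hq := ha.2
  obtain ⟨y, hy⟩ : ∃ y, u 1 = y + a 3 * u 0 := ⟨u 1 - a 3 * u 0, by ring⟩
  obtain ⟨y', hy'⟩ : ∃ y, v 1 = y + a 3 * v 0 := ⟨v 1 - a 3 * v 0, by ring⟩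
  obtain ⟨p, hp⟩ : ∃ p, u 3 = p + a 4 * u 0 := ⟨u 3 - a 4 * u 0, by ring⟩
  obtain ⟨p', hp'⟩ : ∃ p, v 3 = p + a 4 * v 0 := ⟨v 3 - a 4 * v 0, by ring⟩
  simp only [hy, hy', hp, hp', add_sub_cancel_right]
  simp [laurent, dc, zpow_neg, hp, hp']
  generalize cbrtScale α = s at *
  generalize cbrtX a = t at *
  field_simp
  ring

lemma structure_equation₃ (hα : 1 < α) (ha : a ∈ U) (u v : Fin 5 → ℝ) :
    extd (θ₃ α) a u v =
      wedge (θ₁ α) (conn₅ α) a u v + wedge θ₂ (conn₆ α) a u v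
      + wedge (θ₃ α) (fun b => conn₁ α b + conn₄ α b) a u v
      + wedge (θ₄ α) (θ₅ α) a u v := by
  have m := hasFDerivAt_laurent ha
  have hq := hasFDerivAt_apply (𝕜 := ℝ) (4 : Fin 5) a
  have hd := fun w : Fin 5 → ℝ =>
    (((m (-2) 0 (-1)).const_mul (1 / cbrtScale α)).mul
        ((hq.mul_const (w 0)).const_sub (w 3))).congr_of_eventuallyEq
      (f₁ := fun b => θ₃ α b w)
      (by filter_upwards [isOpen_U.mem_nhds ha] with b hb using θ₃_apply hα hb w)
  rw [extd_eq hd]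
  simp only [wedge, conn₁, conn₄, conn₅, conn₆, add_apply, sub_apply, smul_apply,
    smul_eq_mul, θ₁_apply hα ha, θ₂_apply, θ₃_apply hα ha, θ₄_apply hα ha, θ₅_apply hα ha]
  have hs := cbrtScale_pos hα
  have ht := cbrtX_pos ha
  have hq := ha.2
  obtain ⟨y, hy⟩ : ∃ y, u 1 = y + a 3 * u 0 := ⟨u 1 - a 3 * u 0, by ring⟩
  obtain ⟨y', hy'⟩ : ∃ y, v 1 = y + a 3 * v 0 := ⟨v 1 - a 3 * v 0, by ring⟩
  obtain ⟨p, hp⟩ : ∃ p, u 3 = p + a 4 * u 0 := ⟨u 3 - a 4 * u 0, by ring⟩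
  obtain ⟨p', hp'⟩ : ∃ p, v 3 = p + a 4 * v 0 := ⟨v 3 - a 4 * v 0, by ring⟩
  simp only [hy, hy', hp, hp', add_sub_cancel_right]
  simp [laurent, dc, zpow_neg]
  generalize cbrtScale α = s at *
  generalize cbrtX a = t at *
  field_simp
  ring

lemma structure_equation₄ (hα : 1 < α) (ha : a ∈ U) (u v : Fin 5 → ℝ) :
    extd (θ₄ α) a u v =
      wedge (θ₁ α) (conn₇ α) a u v + (4/3) * wedge (θ₃ α) (conn₆ α) a u v
      + wedge (θ₄ α) (conn₁ α) a u v + wedge (θ₅ α) (conn₂ α) a u v := by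
  have m := hasFDerivAt_laurent ha
  have hp := hasFDerivAt_apply (𝕜 := ℝ) (3 : Fin 5) a
  have hq := hasFDerivAt_apply (𝕜 := ℝ) (4 : Fin 5) a
  have hd := fun w : Fin 5 → ℝ =>
    ((((((m (-4) 0 (-2)).const_mul (1 / cbrtScale α ^ 2)).mul_const (w 4)).add
      ((((((m (-7) 0 (-1)).const_mul (cbrtScale α ^ 3 - 1)).add
      ((m (-4) 1 0).const_mul (4 + 2 * cbrtScale α ^ 3))).sub
      ((m (-1) 2 1).const_mul (4 + 2 * cbrtScale α ^ 3))).const_mul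
        (1 / cbrtScale α ^ 5)).mul_const (w 0))).add
      (((((m (-10) 0 (-2)).sub
      ((m (-7) 1 (-1)).const_mul 4)).add
      ((m (-4) 2 0).const_mul 4)).const_mul
        ((cbrtScale α ^ 6 - 14 * cbrtScale α ^ 3 - 32) / (30 * cbrtScale α ^ 8))).mul
        ((hp.mul_const (w 0)).const_sub (w 1)))).add
      ((((((m (-7) 0 (-2)).const_mul (cbrtScale α ^ 3 - 1)).add
      ((m (-4) 1 (-1)).const_mul (8 + 4 * cbrtScale α ^ 3))).sub
      ((m (-1) 2 0).const_mul (12 + 6 * cbrtScale α ^ 3))).const_mul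
        (1 / (3 * cbrtScale α ^ 5))).mul
        ((hq.mul_const (w 0)).const_sub (w 3)))).congr_of_eventuallyEq
      (f₁ := fun b => θ₄ α b w)
      (by filter_upwards [isOpen_U.mem_nhds ha] with b hb using θ₄_apply hα hb w)
  rw [extd_eq hd]
  simp only [wedge, conn₁, conn₂, conn₆, conn₇, add_apply, sub_apply, smul_apply,
    smul_eq_mul, θ₁_apply hα ha, θ₂_apply, θ₃_apply hα ha, θ₄_apply hα ha, θ₅_apply hα ha]
  have hs := cbrtScale_pos hα
  have ht := cbrtX_pos ha
  have hq := ha.2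
  obtain ⟨y, hy⟩ : ∃ y, u 1 = y + a 3 * u 0 := ⟨u 1 - a 3 * u 0, by ring⟩
  obtain ⟨y', hy'⟩ : ∃ y, v 1 = y + a 3 * v 0 := ⟨v 1 - a 3 * v 0, by ring⟩
  obtain ⟨p, hp⟩ : ∃ p, u 3 = p + a 4 * u 0 := ⟨u 3 - a 4 * u 0, by ring⟩
  obtain ⟨p', hp'⟩ : ∃ p, v 3 = p + a 4 * v 0 := ⟨v 3 - a 4 * v 0, by ring⟩
  simp only [hy, hy', hp, hp', add_sub_cancel_right]
  simp [laurent, dc, zpow_neg, hp, hp']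
  generalize cbrtScale α = s at *
  generalize cbrtX a = t at *
  field_simp
  ring

lemma structure_equation₅ (hα : 1 < α) (ha : a ∈ U) (u v : Fin 5 → ℝ) :
    extd (θ₅ α) a u v =
      wedge θ₂ (conn₇ α) a u v - (4/3) * wedge (θ₃ α) (conn₅ α) a u v
      + wedge (θ₄ α) conn₃ a u v + wedge (θ₅ α) (conn₄ α) a u v := by
  have m := hasFDerivAt_laurent ha
  have hp := hasFDerivAt_apply (𝕜 := ℝ) (3 : Fin 5) a
  have hq := hasFDerivAt_apply (𝕜 := ℝ) (4 : Fin 5) a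
  have hd := fun w : Fin 5 → ℝ =>
    (((((m 2 0 1).const_mul (cbrtScale α)).neg.mul_const (w 0)).add
      (((m (-1) 0 0).const_mul ((2 * cbrtScale α ^ 3 - 2) / (5 * cbrtScale α ^ 2))).mul
        ((hp.mul_const (w 0)).const_sub (w 1)))).add
      (((m 2 0 0).const_mul (cbrtScale α)).neg.mul
        ((hq.mul_const (w 0)).const_sub (w 3)))).congr_of_eventuallyEq
      (f₁ := fun b => θ₅ α b w)
      (by filter_upwards [isOpen_U.mem_nhds ha] with b hb using θ₅_apply hα hb w)
  rw [extd_eq hd]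
  simp only [wedge, conn₃, conn₄, conn₅, conn₇, add_apply, sub_apply, smul_apply,
    zero_apply, smul_eq_mul, θ₂_apply, θ₃_apply hα ha, θ₄_apply hα ha, θ₅_apply hα ha]
  have hs := cbrtScale_pos hα
  have ht := cbrtX_pos ha
  have hq := ha.2
  obtain ⟨y, hy⟩ : ∃ y, u 1 = y + a 3 * u 0 := ⟨u 1 - a 3 * u 0, by ring⟩
  obtain ⟨y', hy'⟩ : ∃ y, v 1 = y + a 3 * v 0 := ⟨v 1 - a 3 * v 0, by ring⟩
  obtain ⟨p, hp⟩ : ∃ p, u 3 = p + a 4 * u 0 := ⟨u 3 - a 4 * u 0, by ring⟩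
  obtain ⟨p', hp'⟩ : ∃ p, v 3 = p + a 4 * v 0 := ⟨v 3 - a 4 * v 0, by ring⟩
  simp only [hy, hy', hp, hp', add_sub_cancel_right]
  simp [laurent, dc, zpow_neg, hp, hp']
  generalize cbrtScale α = s at *
  generalize cbrtX a = t at *
  field_simp
  ring

end StructureEquations

theorem monge_coframing_satisfies_cartan_structure_equations
    (α : ℝ) (hα : 1 < α) :
    ∃ Ω₁ Ω₂ Ω₃ Ω₄ Ω₅ Ω₆ Ω₇ : (Fin 5 → ℝ) → ((Fin 5 → ℝ) →L[ℝ] ℝ),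
      ContDiffOn ℝ (⊤ : ℕ∞) Ω₁ U ∧ ContDiffOn ℝ (⊤ : ℕ∞) Ω₂ U ∧ ContDiffOn ℝ (⊤ : ℕ∞) Ω₃ U ∧
      ContDiffOn ℝ (⊤ : ℕ∞) Ω₄ U ∧ ContDiffOn ℝ (⊤ : ℕ∞) Ω₅ U ∧ ContDiffOn ℝ (⊤ : ℕ∞) Ω₆ U ∧
      ContDiffOn ℝ (⊤ : ℕ∞) Ω₇ U ∧
      ∀ a ∈ U, ∀ u v : Fin 5 → ℝ,
        extd (θ₁ α) a u v =
          wedge (θ₁ α) (fun b => (2:ℝ) • Ω₁ b + Ω₄ b) a u v + wedge θ₂ Ω₂ a u v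
          + wedge (θ₃ α) (θ₄ α) a u v ∧
        extd θ₂ a u v =
          wedge (θ₁ α) Ω₃ a u v + wedge θ₂ (fun b => Ω₁ b + (2:ℝ) • Ω₄ b) a u v
          + wedge (θ₃ α) (θ₅ α) a u v ∧
        extd (θ₃ α) a u v =
          wedge (θ₁ α) Ω₅ a u v + wedge θ₂ Ω₆ a u v
          + wedge (θ₃ α) (fun b => Ω₁ b + Ω₄ b) a u v
          + wedge (θ₄ α) (θ₅ α) a u v ∧
        extd (θ₄ α) a u v =
          wedge (θ₁ α) Ω₇ a u v + (4/3) * wedge (θ₃ α) Ω₆ a u v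
          + wedge (θ₄ α) Ω₁ a u v + wedge (θ₅ α) Ω₂ a u v ∧
        extd (θ₅ α) a u v =
          wedge θ₂ Ω₇ a u v - (4/3) * wedge (θ₃ α) Ω₅ a u v
          + wedge (θ₄ α) Ω₃ a u v + wedge (θ₅ α) Ω₄ a u v := by
  refine ⟨conn₁ α, conn₂ α, conn₃, conn₄ α, conn₅ α, conn₆ α, conn₇ α, contDiffOn_conn₁ hα,
    contDiffOn_conn₂ hα, contDiffOn_const, contDiffOn_conn₄ hα, contDiffOn_conn₅ hα,
    contDiffOn_conn₆ hα, contDiffOn_conn₇ hα, fun a ha u v => ⟨structure_equation₁ hα ha u v,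
    structure_equation₂ hα ha u v, structure_equation₃ hα ha u v, structure_equation₄ hα ha u v,
    structure_equation₅ hα ha u v⟩⟩

end
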